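/- arXiv:2010.00546 — 6 statements merged into one kernel-verified Lean document; each statement's English description precedes it below -/
import Mathlib

section
/- For every α ∈ (0,1), the Sibuya(α) probabilities have the fat-tailed asymptotics w_α(k) ~ (α/Γ(1−α)) k^{−α−1} as k → ∞; that is, lim_{k→∞} k^{α+1} · w_α(k) = α/Γ(1−α). -/
/-- Sibuya(α) probabilities: `w_α(k) = (−1)^{k−1} (α choose k)` with
`(α choose k) = (∏_{j=0}^{k-1} (α − j)) / k!`. -/
noncomputable def sibuya (α : ℝ) (k : ℕ) : ℝ :=
  (-1 : ℝ) ^ (k - 1) * ((∏ j ∈ Finset.range k, (α - (j : ℝ))) / (k.factorial : ℝ))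

/-! The signs in `w_α(n + 1)` cancel against those of the factors `α - j`, `1 ≤ j ≤ n`, leaving
`α (1 - α)ₙ / (n + 1)!` with the rising factorial `(1 - α)ₙ`. Euler's limit formula for `Γ(s)`, read
upside down, says `(s)ₙ / n! ~ n^(s - 1) / Γ(s)`; apply it at `s = 1 - α`. -/

open Filter Finset Topology
open scoped Nat

theorem ascPochhammer_eval_eq_prod_range {R : Type*} [CommSemiring R] (s : R) (n : ℕ) :
    (ascPochhammer R n).eval s = ∏ j ∈ range n, (s + j) := by
  induction n with
  | zero => simp
  | succ n ih => rw [ascPochhammer_succ_eval, ih, prod_range_succ]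

theorem rpow_mul_ascPochhammer_eval_div_factorial_eq {s : ℝ} {n : ℕ} (hn : n ≠ 0)
    (hsn : (n : ℝ) + s ≠ 0) :
    (n : ℝ) ^ (1 - s) * ((ascPochhammer ℝ n).eval s / n !) =
      (Real.GammaSeq s n)⁻¹ * (n / (n + s)) := by
  have hn_pos : (0 : ℝ) < n := by positivity
  have hpow : (n : ℝ) ^ s ≠ 0 := (Real.rpow_pos_of_pos hn_pos s).ne'
  rw [Real.GammaSeq, prod_range_succ, ← ascPochhammer_eval_eq_prod_range, add_comm s,
    Real.rpow_sub hn_pos, Real.rpow_one]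
  field_simp

theorem tendsto_rpow_mul_ascPochhammer_eval_div_factorial {s : ℝ} (hs : ∀ m : ℕ, s ≠ -m) :
    Tendsto (fun n : ℕ ↦ (n : ℝ) ^ (1 - s) * ((ascPochhammer ℝ n).eval s / n !)) atTop
      (𝓝 (Real.Gamma s)⁻¹) := by
  have hlim := ((Real.GammaSeq_tendsto_Gamma s).inv₀ (Real.Gamma_ne_zero hs)).mul
    (tendsto_natCast_div_add_atTop s)
  rw [mul_one] at hlim
  refine hlim.congr' ?_
  filter_upwards [eventually_ne_atTop 0] with n hn
  have hsn : (n : ℝ) + s ≠ 0 := fun h ↦ hs n (eq_neg_of_add_eq_zero_right h)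
  exact (rpow_mul_ascPochhammer_eval_div_factorial_eq hn hsn).symm

theorem sibuya_succ (α : ℝ) (n : ℕ) :
    sibuya α (n + 1) = α * (ascPochhammer ℝ n).eval (1 - α) / (n + 1)! := by
  have hsigns : (-1) ^ n * ∏ j ∈ range n, (α - ((j + 1 : ℕ) : ℝ)) =
      (ascPochhammer ℝ n).eval (1 - α) := by
    rw [← neg_sub α 1, ascPochhammer_eval_neg_eq_descPochhammer, descPochhammer_eval_eq_prod_range]
    simp only [Nat.cast_add_one, sub_sub, add_comm]
  rw [sibuya, prod_range_succ', ← hsigns, Nat.add_sub_cancel, Nat.cast_zero, sub_zero]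
  ring

theorem rpow_mul_sibuya_succ (α : ℝ) {n : ℕ} (hn : n ≠ 0) :
    ((n + 1 : ℕ) : ℝ) ^ (α + 1) * sibuya α (n + 1) =
      α * (((n : ℝ) + 1) / n) ^ α *
        ((n : ℝ) ^ α * ((ascPochhammer ℝ n).eval (1 - α) / n !)) := by
  have hn_pos : (0 : ℝ) < n := by positivity
  have hpow : (n : ℝ) ^ α ≠ 0 := (Real.rpow_pos_of_pos hn_pos α).ne'
  rw [sibuya_succ, Nat.cast_add_one, Real.rpow_add_one (by positivity),
    Real.div_rpow (by positivity) hn_pos.le, Nat.factorial_succ]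
  push_cast
  field_simp

theorem tendsto_natCast_add_one_div_self_rpow (a : ℝ) :
    Tendsto (fun n : ℕ ↦ (((n : ℝ) + 1) / n) ^ a) atTop (𝓝 1) := by
  have hratio := (tendsto_natCast_div_add_atTop (1 : ℝ)).inv₀ one_ne_zero
  simpa using hratio.rpow_const (p := a) (by simp)

theorem sibuya_tail_asymptotics_general (α : ℝ) (hα : ∀ m : ℕ, α ≠ m + 1) :
    Tendsto (fun k : ℕ ↦ (k : ℝ) ^ (α + 1) * sibuya α k) atTop
      (𝓝 (α / Real.Gamma (1 - α))) := by
  have hpole : ∀ m : ℕ, 1 - α ≠ -m := fun m h ↦ hα m (by linarith)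
  have hpoch := tendsto_rpow_mul_ascPochhammer_eval_div_factorial hpole
  rw [sub_sub_cancel] at hpoch
  have hlim := ((tendsto_natCast_add_one_div_self_rpow α).const_mul α).mul hpoch
  rw [mul_one, ← div_eq_mul_inv] at hlim
  rw [← tendsto_add_atTop_iff_nat 1]
  refine hlim.congr' ?_
  filter_upwards [eventually_ne_atTop 0] with n hn
  exact (rpow_mul_sibuya_succ α hn).symm

/-- For every `α ∈ (0,1)`, the fat-tailed asymptotics
`lim_{k→∞} k^{α+1} · w_α(k) = α / Γ(1−α)`. -/
theorem sibuya_tail_asymptotics (α : ℝ) (hα : α ∈ Set.Ioo (0 : ℝ) 1) :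
    Filter.Tendsto (fun k : ℕ => (k : ℝ) ^ (α + 1) * sibuya α k)
      Filter.atTop (nhds (α / Real.Gamma (1 - α))) :=
  sibuya_tail_asymptotics_general α fun m ↦ (hα.2.trans_le (by simp)).ne
end

section
/- Let L be a real N×N matrix (N ≥ 1 finite) such that there exist Λ > 1 and a positive integer n₀ with: every entry of the matrix Λ·I − L is nonnegative, and for every n ≥ n₀ every entry of (Λ·I − L)^n is strictly positive. Then every entry of the matrix exponential exp(−L) is strictly positive. -/
/-- Matrix exponential `exp(A) = Σ_{n=0}^∞ A^n / n!`. -/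
noncomputable def matExp {N : ℕ} (A : Matrix (Fin N) (Fin N) ℝ) : Matrix (Fin N) (Fin N) ℝ :=
  ∑' n : ℕ, ((n.factorial : ℝ)⁻¹) • A ^ n

/-!
Write `-L = A - Λ • 1` with `A = Λ • 1 - L`. Since `Λ • 1` is central,
`exp (-L) = exp (-Λ) • exp A`, and since `A` is entrywise nonnegative, each entry of `exp A`
dominates the corresponding entry of every single term `A ^ k / k!` of its series.
-/

section MatrixExponential

open NormedSpace
open scoped Nat

variable {m : Type*} [Fintype m] [DecidableEq m]

theorem hasSum_matrix_exp {𝔸 : Type*} [NormedRing 𝔸] [NormedAlgebra ℚ 𝔸] [CompleteSpace 𝔸]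
    (A : Matrix m m 𝔸) : HasSum (fun k : ℕ => (k ! : ℚ)⁻¹ • A ^ k) (exp A) :=
  -- Instance search does not unfold the operator norm far enough to see that its uniformity is
  -- the entrywise one, so completeness is supplied by hand.
  open scoped Matrix.Norms.Operator in
  @exp_series_hasSum_exp' ℚ _ _ _ _ _ _ (Matrix.instCompleteSpace m m 𝔸) A

theorem hasSum_matrix_exp_apply {𝔸 : Type*} [NormedRing 𝔸] [NormedAlgebra ℚ 𝔸] [CompleteSpace 𝔸]
    (A : Matrix m m 𝔸) (i j : m) :
    HasSum (fun k : ℕ => (k ! : ℚ)⁻¹ • (A ^ k) i j) (exp A i j) :=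
  Pi.hasSum.1 (Pi.hasSum.1 (hasSum_matrix_exp A) i) j

theorem matrix_exp_add_smul_one {𝔸 : Type*} [NormedCommRing 𝔸] [NormedAlgebra ℚ 𝔸]
    [CompleteSpace 𝔸] (A : Matrix m m 𝔸) (c : 𝔸) :
    exp (A + c • (1 : Matrix m m 𝔸)) = exp c • exp A := by
  have exp_smul_one : exp (c • (1 : Matrix m m 𝔸)) = exp c • (1 : Matrix m m 𝔸) := by
    simp only [Matrix.smul_one_eq_diagonal, Matrix.exp_diagonal, Pi.exp_def]
  rw [Matrix.exp_add_of_commute _ _ ((Commute.one_right A).smul_right c), exp_smul_one,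
    mul_smul_comm, mul_one]

theorem pow_apply_div_factorial_le_matrix_exp_apply {A : Matrix m m ℝ} (hA : ∀ i j, 0 ≤ A i j)
    (k : ℕ) (i j : m) : (A ^ k) i j / k ! ≤ exp A i j := by
  have hasSum_entry : HasSum (fun l : ℕ => (A ^ l) i j / l !) (exp A i j) := by
    simpa only [Rat.smul_def, div_eq_inv_mul, Rat.cast_inv, Rat.cast_natCast]
      using hasSum_matrix_exp_apply A i j
  exact le_hasSum hasSum_entry k fun l _ =>
    div_nonneg (Matrix.pow_apply_nonneg hA l i j) (Nat.cast_nonneg _)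

theorem matrix_exp_apply_pos {A : Matrix m m ℝ} (hA : ∀ i j, 0 ≤ A i j) {k : ℕ} {i j : m}
    (hk : 0 < (A ^ k) i j) : 0 < exp A i j :=
  (div_pos hk (mod_cast k.factorial_pos)).trans_le
    (pow_apply_div_factorial_le_matrix_exp_apply hA k i j)

theorem matExp_eq_exp {N : ℕ} (A : Matrix (Fin N) (Fin N) ℝ) : matExp A = exp A :=
  (congrFun (exp_eq_tsum ℝ) A).symm

theorem matExp_neg_entries_pos_general {L : Matrix m m ℝ} {Λ : ℝ}
    (hnonneg : ∀ i j, 0 ≤ (Λ • (1 : Matrix m m ℝ) - L) i j) {k : ℕ} {i j : m}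
    (hpos : 0 < ((Λ • (1 : Matrix m m ℝ) - L) ^ k) i j) : 0 < exp (-L) i j := by
  have neg_eq_shift : -L = (Λ • (1 : Matrix m m ℝ) - L) + (-Λ) • (1 : Matrix m m ℝ) := by
    module
  rw [neg_eq_shift, matrix_exp_add_smul_one, ← Real.exp_eq_exp_ℝ]
  exact mul_pos (Real.exp_pos _) (matrix_exp_apply_pos hnonneg hpos)

end MatrixExponential

/-- If there exist `Λ > 1` and `n₀ ≥ 1` such that `Λ·I − L` has nonnegative entries and
`(Λ·I − L)^n` has strictly positive entries for every `n ≥ n₀`, then every entry of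
`exp(−L)` is strictly positive. -/
theorem matExp_neg_entries_pos (N : ℕ) (hN : 1 ≤ N) (L : Matrix (Fin N) (Fin N) ℝ)
    (Λ : ℝ) (hΛ : 1 < Λ) (n₀ : ℕ) (hn₀ : 1 ≤ n₀)
    (hnonneg : ∀ i j, 0 ≤ (Λ • (1 : Matrix (Fin N) (Fin N) ℝ) - L) i j)
    (hpos : ∀ n, n₀ ≤ n → ∀ i j, 0 < ((Λ • (1 : Matrix (Fin N) (Fin N) ℝ) - L) ^ n) i j) :
    ∀ i j, 0 < matExp (-L) i j := by
  intro i j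
  simpa only [matExp_eq_exp] using matExp_neg_entries_pos_general hnonneg (hpos n₀ le_rfl i j)
end

section
/- For every α ∈ (0,1], λ > 0 and s > 0, the Laplace transform of the Mittag-Leffler density equals λ/(λ + s^α): ∫_0^∞ e^{−sτ} · λ τ^{α−1} E_{α,α}(−λ τ^α) dτ = λ/(λ + s^α). -/
open MeasureTheory

/-- Two-parameter Mittag-Leffler function `E_{a,b}(z) = Σ_{m=0}^∞ z^m / Γ(a m + b)`. -/
noncomputable def mittagLeffler (a b z : ℝ) : ℝ :=
  ∑' m : ℕ, z ^ m / Real.Gamma (a * m + b)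

/-!
Write `φ_p(t) = t ^ (p - 1) / Γ(p)` and
`K_b(t) = t ^ (b - 1) E_{a,b}(z t ^ a) = ∑ z ^ m φ_{am+b}(t)`. Since `φ_p * φ_c = φ_{p+c}`,
fractional integration of order `c` maps `K_b` to `K_{b+c}`, so `K_b = φ_b + z K_{b+a}` says
`K_b = φ_b + z φ_a * K_b`. The Laplace transform of `φ_p` is `s ^ (-p)`, and taking transforms gives
a linear equation for that of `K_b`.

Integrating the series termwise would only reach `s ^ a > |z|`; for every `s > 0` one needs a
growth bound on `K_b` when `z ≤ 0`. It comes from `0 ≤ K_b ≤ φ_b` for `b ≥ 1`, which reduces to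
`0 ≤ K_1`. For `a < 1` the Riemann–Liouville derivative of order `a` of `K_1` is
`K_{1-a} = φ_{1-a} + z K_1`; at a minimum `t` of `K_1` on `[0, t]` it is at most
`K_1(t) φ_{1-a}(t)`, so that `K_1(t) (φ_{1-a}(t) - z) ≥ φ_{1-a}(t) > 0`.
-/

open Set Filter Topology

lemma exp_neg_mul_rpow_le_Gamma {A x : ℝ} (hA : 0 < A) (hx : 1 ≤ x) :
    Real.exp (-A) * A ^ (x - 1) ≤ Real.Gamma x := by
  have hΓ := Real.GammaIntegral_convergent (zero_lt_one.trans_le hx)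
  rw [Real.Gamma_eq_integral (zero_lt_one.trans_le hx)]
  calc Real.exp (-A) * A ^ (x - 1) = ∫ t in Ioi A, Real.exp (-t) * A ^ (x - 1) := by
        rw [integral_mul_const, integral_exp_neg_Ioi]
    _ ≤ ∫ t in Ioi A, Real.exp (-t) * t ^ (x - 1) := by
        refine setIntegral_mono_on ((integrableOn_exp_neg_Ioi A).mul_const _)
          (hΓ.mono_set (Ioi_subset_Ioi hA.le)) measurableSet_Ioi fun t ht ↦ ?_
        gcongr
        exact le_of_lt ht
    _ ≤ ∫ t in Ioi 0, Real.exp (-t) * t ^ (x - 1) :=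
        setIntegral_mono_set hΓ
          (ae_restrict_of_forall_mem measurableSet_Ioi fun t (ht : 0 < t) ↦ by positivity)
          (Ioi_subset_Ioi hA.le).eventuallyLE

lemma summable_pow_div_Gamma {a : ℝ} (ha : 0 < a) (b z : ℝ) :
    Summable fun m : ℕ ↦ z ^ m / Real.Gamma (a * m + b) := by
  -- With this `A`, `Γ(x) ≥ e⁻ᴬ Aˣ⁻¹` gives domination by a geometric series of ratio `1 / 2`.
  obtain ⟨A, hA, hAa⟩ : ∃ A : ℝ, 0 < A ∧ A ^ a = 2 * (|z| + 1) :=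
    ⟨(2 * (|z| + 1)) ^ a⁻¹, by positivity, Real.rpow_inv_rpow (by positivity) ha.ne'⟩
  have hgeom : Summable fun m : ℕ ↦ (Real.exp A * A ^ (1 - b)) * (1 / 2 : ℝ) ^ m :=
    (summable_geometric_of_lt_one (by norm_num) (by norm_num)).mul_left _
  refine hgeom.of_norm_bounded_eventually_nat ?_
  have hlim : Tendsto (fun m : ℕ ↦ a * (m : ℝ) + b) atTop atTop :=
    tendsto_atTop_add_const_right _ _ (tendsto_natCast_atTop_atTop.const_mul_atTop ha)
  filter_upwards [hlim.eventually_ge_atTop 1] with m hm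
  have hΓ := exp_neg_mul_rpow_le_Gamma hA hm
  have hpow : A ^ (a * m + b - 1) = (2 * (|z| + 1)) ^ m * (A ^ (1 - b))⁻¹ := by
    rw [← Real.rpow_neg hA.le, ← hAa, ← Real.rpow_natCast, ← Real.rpow_mul hA.le,
      ← Real.rpow_add hA]
    ring_nf
  rw [norm_div, norm_pow, Real.norm_eq_abs,
    Real.norm_of_nonneg (le_trans (by positivity) hΓ)]
  calc |z| ^ m / Real.Gamma (a * m + b)
      ≤ (|z| + 1) ^ m / (Real.exp (-A) * A ^ (a * m + b - 1)) := by
        gcongr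
        linarith
    _ = (Real.exp A * A ^ (1 - b)) * (1 / 2 : ℝ) ^ m := by
        rw [hpow, mul_pow, Real.exp_neg, one_div, inv_pow]
        field_simp

lemma continuous_mittagLeffler {a : ℝ} (ha : 0 < a) (b : ℝ) : Continuous (mittagLeffler a b) := by
  refine continuous_iff_continuousAt.2 fun z ↦ ?_
  have hcont : ContinuousOn (mittagLeffler a b) (Icc (-(|z| + 1)) (|z| + 1)) := by
    refine continuousOn_tsum (fun m ↦ by fun_prop) (summable_pow_div_Gamma ha b (|z| + 1)).norm
      fun m w hw ↦ ?_
    rw [norm_div, norm_pow, norm_div, norm_pow, Real.norm_of_nonneg (by positivity : 0 ≤ |z| + 1)]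
    gcongr
    exact abs_le.2 hw
  exact hcont.continuousAt (Icc_mem_nhds (by linarith [neg_abs_le z]) (by linarith [le_abs_self z]))

lemma mittagLeffler_one_one (z : ℝ) : mittagLeffler 1 1 z = Real.exp z := by
  simp_rw [mittagLeffler, one_mul, Real.Gamma_nat_eq_factorial, Real.exp_eq_exp_ℝ,
    NormedSpace.exp_eq_tsum_div]

/-- The Gelfand–Shilov kernel `φ_p(t) = t ^ (p - 1) / Γ(p)` of fractional integration of order `p`,
normalized so that `φ_p * φ_q = φ_{p + q}` for convolution on the half-line. -/
noncomputable def fracKernel (p t : ℝ) : ℝ :=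
  t ^ (p - 1) / Real.Gamma p

/-- The Riemann–Liouville fractional integral of order `c` with base point `0`. -/
noncomputable def fracIntegral (c : ℝ) (f : ℝ → ℝ) (t : ℝ) : ℝ :=
  ∫ x in (0 : ℝ)..t, f x * fracKernel c (t - x)

lemma fracKernel_one (t : ℝ) : fracKernel 1 t = 1 := by
  simp [fracKernel]

lemma fracKernel_nonneg {p t : ℝ} (hp : 0 < p) (ht : 0 ≤ t) : 0 ≤ fracKernel p t :=
  div_nonneg (Real.rpow_nonneg ht _) (Real.Gamma_pos_of_pos hp).le

lemma fracKernel_pos {p t : ℝ} (hp : 0 < p) (ht : 0 < t) : 0 < fracKernel p t :=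
  div_pos (Real.rpow_pos_of_pos ht _) (Real.Gamma_pos_of_pos hp)

lemma antitoneOn_fracKernel {p : ℝ} (hp : p ∈ Ioc (0 : ℝ) 1) : AntitoneOn (fracKernel p) (Ioi 0) :=
  fun _ hx _ _ hxy ↦ div_le_div_of_nonneg_right
    (Real.rpow_le_rpow_of_nonpos hx hxy (by linarith [hp.2])) (Real.Gamma_pos_of_pos hp.1).le

lemma tendsto_fracKernel_zero {p : ℝ} (hp : 1 < p) : Tendsto (fracKernel p) (𝓝 0) (𝓝 0) := by
  have hcont : Continuous (fracKernel p) :=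
    (Real.continuous_rpow_const (by linarith)).div_const _
  simpa [fracKernel, Real.zero_rpow (sub_pos.2 hp).ne'] using hcont.tendsto 0

lemma hasDerivAt_fracKernel_add_one {p t : ℝ} (hp : p ≠ 0) (ht : t ≠ 0) :
    HasDerivAt (fracKernel (p + 1)) (fracKernel p t) t := by
  refine ((Real.hasDerivAt_rpow_const (p := p + 1 - 1) (.inl ht)).div_const _).congr_deriv ?_
  rw [Real.Gamma_add_one hp, add_sub_cancel_right, fracKernel, mul_div_mul_left _ _ hp]

lemma intervalIntegrable_fracKernel {p : ℝ} (hp : 0 < p) (x y : ℝ) :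
    IntervalIntegrable (fracKernel p) volume x y :=
  (intervalIntegral.intervalIntegrable_rpow' (by linarith)).div_const _

lemma intervalIntegrable_fracKernel_sub {p : ℝ} (hp : 0 < p) (t x y : ℝ) :
    IntervalIntegrable (fun u ↦ fracKernel p (t - u)) volume x y := by
  simpa using (intervalIntegrable_fracKernel hp (t - x) (t - y)).comp_sub_left t

lemma integral_fracKernel {p : ℝ} (hp : 0 < p) (t : ℝ) :
    ∫ x in (0 : ℝ)..t, fracKernel p x = fracKernel (p + 1) t := by
  simp only [fracKernel]
  rw [intervalIntegral.integral_div, integral_rpow (.inl (by linarith)), Real.Gamma_add_one hp.ne',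
    sub_add_cancel, add_sub_cancel_right, Real.zero_rpow hp.ne', sub_zero, div_div]

lemma integral_fracKernel_sub {p : ℝ} (hp : 0 < p) (y t : ℝ) :
    ∫ x in y..t, fracKernel p (t - x) = fracKernel (p + 1) (t - y) := by
  rw [intervalIntegral.integral_comp_sub_left (fracKernel p), sub_self, integral_fracKernel hp]

lemma integral_rpow_mul_sub_rpow {p q t : ℝ} (hp : 0 < p) (hq : 0 < q) (ht : 0 < t) :
    ∫ x in (0 : ℝ)..t, x ^ (p - 1) * (t - x) ^ (q - 1) =
      t ^ (p + q - 1) * ProbabilityTheory.beta p q := by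
  have hscaled := Complex.betaIntegral_scaled p q ht
  rw [Complex.betaIntegral_eq_Gamma_mul_div _ _ (by simpa) (by simpa), Complex.Gamma_ofReal,
    Complex.Gamma_ofReal, ← Complex.ofReal_add, Complex.Gamma_ofReal, ← Complex.ofReal_one,
    ← Complex.ofReal_sub, ← Complex.ofReal_sub, ← Complex.ofReal_sub,
    ← Complex.ofReal_cpow ht.le] at hscaled
  have hreal : ∫ x in (0 : ℝ)..t, (x : ℂ) ^ ((p - 1 : ℝ) : ℂ) * ((t : ℂ) - x) ^ ((q - 1 : ℝ) : ℂ) =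
      ∫ x in (0 : ℝ)..t, ((x ^ (p - 1) * (t - x) ^ (q - 1) : ℝ) : ℂ) := by
    refine intervalIntegral.integral_congr fun x hx ↦ ?_
    rw [uIcc_of_le ht.le] at hx
    rw [← Complex.ofReal_sub, ← Complex.ofReal_cpow hx.1,
      ← Complex.ofReal_cpow (sub_nonneg.2 hx.2), Complex.ofReal_mul]
  rw [hreal, intervalIntegral.integral_ofReal] at hscaled
  exact_mod_cast hscaled

lemma fracIntegral_fracKernel {p c t : ℝ} (hp : 0 < p) (hc : 0 < c) (ht : 0 < t) :
    fracIntegral c (fracKernel p) t = fracKernel (p + c) t := by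
  simp only [fracIntegral, fracKernel, div_mul_div_comm]
  rw [intervalIntegral.integral_div, integral_rpow_mul_sub_rpow hp hc ht, ProbabilityTheory.beta]
  field_simp [(Real.Gamma_pos_of_pos hp).ne', (Real.Gamma_pos_of_pos hc).ne']

lemma intervalIntegrable_fracKernel_mul_fracKernel_sub {p c t : ℝ} (hp : 0 < p) (hc : 0 < c)
    (ht : 0 < t) :
    IntervalIntegrable (fun x ↦ fracKernel p x * fracKernel c (t - x)) volume 0 t := by
  refine intervalIntegral.intervalIntegrable_of_integral_ne_zero ?_
  rw [← fracIntegral, fracIntegral_fracKernel hp hc ht]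
  exact (fracKernel_pos (add_pos hp hc) ht).ne'

lemma fracIntegral_one (f : ℝ → ℝ) (t : ℝ) : fracIntegral 1 f t = ∫ x in (0 : ℝ)..t, f x := by
  simp_rw [fracIntegral, fracKernel_one, mul_one]

lemma fracIntegral_nonneg {c t : ℝ} {f : ℝ → ℝ} (hc : 0 < c) (ht : 0 ≤ t)
    (hf : ∀ x ∈ Icc 0 t, 0 ≤ f x) : 0 ≤ fracIntegral c f t :=
  intervalIntegral.integral_nonneg ht fun x hx ↦
    mul_nonneg (hf x hx) (fracKernel_nonneg hc (sub_nonneg.2 hx.2))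

lemma intervalIntegrable_mul_fracKernel_sub {c x y : ℝ} {f : ℝ → ℝ} (hc : 0 < c)
    (hf : ContinuousOn f (uIcc x y)) (t : ℝ) :
    IntervalIntegrable (fun u ↦ f u * fracKernel c (t - u)) volume x y :=
  (intervalIntegrable_fracKernel_sub hc t x y).continuousOn_mul hf

lemma fracIntegral_sub_const {c t : ℝ} {f : ℝ → ℝ} (hc : 0 < c) (hf : ContinuousOn f (uIcc 0 t))
    (m : ℝ) :
    fracIntegral c (fun x ↦ f x - m) t = fracIntegral c f t - m * fracKernel (c + 1) t := by
  simp only [fracIntegral, sub_mul]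
  rw [intervalIntegral.integral_sub (intervalIntegrable_mul_fracKernel_sub hc hf t)
    ((intervalIntegrable_fracKernel_sub hc t 0 t).const_mul m),
    intervalIntegral.integral_const_mul, integral_fracKernel_sub hc, sub_zero]

lemma fracIntegral_le_add {c y t C : ℝ} {v : ℝ → ℝ} (hc : c ∈ Ioc (0 : ℝ) 1) (hy : 0 ≤ y)
    (hyt : y ≤ t) (hv : ContinuousOn v (Icc 0 t)) (hv0 : ∀ x ∈ Icc 0 t, 0 ≤ v x)
    (hvC : ∀ x ∈ Icc y t, v x ≤ C) :
    fracIntegral c v t ≤ fracIntegral c v y + C * fracKernel (c + 1) (t - y) := by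
  have hv_left : ContinuousOn v (uIcc 0 y) := by
    rw [uIcc_of_le hy]
    exact hv.mono (Icc_subset_Icc_right hyt)
  have hv_right : ContinuousOn v (uIcc y t) := by
    rw [uIcc_of_le hyt]
    exact hv.mono (Icc_subset_Icc_left hy)
  have hleft : ∫ x in (0 : ℝ)..y, v x * fracKernel c (t - x) ≤ fracIntegral c v y := by
    refine intervalIntegral.integral_mono_on_of_le_Ioo hy
      (intervalIntegrable_mul_fracKernel_sub hc.1 hv_left t)
      (intervalIntegrable_mul_fracKernel_sub hc.1 hv_left y) fun x hx ↦ ?_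
    exact mul_le_mul_of_nonneg_left
      (antitoneOn_fracKernel hc (sub_pos.2 hx.2) (sub_pos.2 (hx.2.trans_le hyt)) (by gcongr))
      (hv0 x ⟨hx.1.le, hx.2.le.trans hyt⟩)
  have hright : ∫ x in y..t, v x * fracKernel c (t - x) ≤ C * fracKernel (c + 1) (t - y) := by
    rw [← integral_fracKernel_sub hc.1, ← intervalIntegral.integral_const_mul]
    exact intervalIntegral.integral_mono_on hyt
      (intervalIntegrable_mul_fracKernel_sub hc.1 hv_right t)
      ((intervalIntegrable_fracKernel_sub hc.1 t y t).const_mul C) fun x hx ↦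
        mul_le_mul_of_nonneg_right (hvC x hx) (fracKernel_nonneg hc.1 (sub_nonneg.2 hx.2))
  rw [fracIntegral, ← intervalIntegral.integral_add_adjacent_intervals
    (intervalIntegrable_mul_fracKernel_sub hc.1 hv_left t)
    (intervalIntegrable_mul_fracKernel_sub hc.1 hv_right t)]
  exact add_le_add hleft hright

lemma nonpos_of_hasDerivWithinAt_fracIntegral {c t d : ℝ} {v : ℝ → ℝ} (hc : c ∈ Ioc (0 : ℝ) 1)
    (ht : 0 < t) (hv : ContinuousOn v (Icc 0 t)) (hv0 : ∀ x ∈ Icc 0 t, 0 ≤ v x) (hvt : v t = 0)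
    (hdiff : DifferentiableWithinAt ℝ v (Iic t) t)
    (hderiv : HasDerivWithinAt (fracIntegral c v) d (Iio t) t) : d ≤ 0 := by
  obtain ⟨C, hC0, hC⟩ := hdiff.isBigO_sub.exists_pos
  obtain ⟨ℓ, hℓ, hlip⟩ := (mem_nhdsLE_iff_exists_Icc_subset (a := t)).1 hC.bound
  have hkernel : Tendsto (fun y ↦ C * fracKernel (c + 1) (t - y)) (𝓝[<] t) (𝓝 0) := by
    have hsub : Tendsto (fun y ↦ t - y) (𝓝[<] t) (𝓝 0) :=
      tendsto_nhdsWithin_of_tendsto_nhds (Continuous.tendsto' (by fun_prop) _ _ (sub_self t))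
    simpa using ((tendsto_fracKernel_zero (by linarith [hc.1])).comp hsub).const_mul C
  refine le_of_tendsto_of_tendsto ((hasDerivWithinAt_iff_tendsto_slope' self_notMem_Iio).1 hderiv)
    hkernel ?_
  filter_upwards [Ioo_mem_nhdsLT (max_lt hℓ ht)] with y hy
  have hℓy : ℓ ≤ y := (le_max_left _ _).trans hy.1.le
  have hty : 0 < t - y := sub_pos.2 hy.2
  have hv_le : ∀ x ∈ Icc y t, v x ≤ C * (t - y) := fun x hx ↦
    calc v x ≤ ‖v x - v t‖ := by simpa [hvt] using le_abs_self (v x)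
      _ ≤ C * ‖x - t‖ := hlip ⟨hℓy.trans hx.1, hx.2⟩
      _ = C * (t - x) := by rw [Real.norm_eq_abs, abs_sub_comm, abs_of_nonneg (sub_nonneg.2 hx.2)]
      _ ≤ C * (t - y) := by gcongr; exact hx.1
  have hincr := fracIntegral_le_add hc ((le_max_right _ _).trans hy.1.le) hy.2.le hv hv0 hv_le
  rw [slope_comm, slope_def_field, div_le_iff₀ hty]
  linarith

/-- Extremum principle for the Riemann–Liouville derivative of order `1 - c`:
`f t * fracKernel c t` is that derivative, at `t`, of the constant function with value `f t`. -/
lemma le_mul_fracKernel_of_isMinOn {c t d : ℝ} {f : ℝ → ℝ} (hc : c ∈ Ioc (0 : ℝ) 1)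
    (ht : 0 < t) (hf : ContinuousOn f (Icc 0 t)) (hmin : IsMinOn f (Icc 0 t) t)
    (hdiff : DifferentiableWithinAt ℝ f (Iic t) t)
    (hderiv : HasDerivWithinAt (fracIntegral c f) d (Iio t) t) : d ≤ f t * fracKernel c t := by
  have hsub {y : ℝ} (hy : y ∈ Ioc 0 t) : fracIntegral c (fun x ↦ f x - f t) y =
      fracIntegral c f y - f t * fracKernel (c + 1) y := by
    refine fracIntegral_sub_const hc.1 ?_ (f t)
    rw [uIcc_of_le hy.1.le]
    exact hf.mono (Icc_subset_Icc_right hy.2)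
  have hderiv_sub : HasDerivWithinAt (fracIntegral c fun x ↦ f x - f t)
      (d - f t * fracKernel c t) (Iio t) t := by
    refine (hderiv.sub ((hasDerivAt_fracKernel_add_one hc.1.ne' ht.ne').hasDerivWithinAt.const_mul
      (f t))).congr_of_eventuallyEq ?_ (hsub ⟨ht, le_rfl⟩)
    filter_upwards [Ioo_mem_nhdsLT ht] with y hy using hsub ⟨hy.1, hy.2.le⟩
  exact sub_nonpos.1 <| nonpos_of_hasDerivWithinAt_fracIntegral hc ht (hf.sub continuousOn_const)
    (fun x hx ↦ sub_nonneg.2 (hmin hx)) (sub_self _) (hdiff.sub_const _) hderiv_sub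

/-- The kernel `t ^ (b - 1) * E_{a,b}(z t ^ a)`, which solves the fractional integral equation
`u = φ_b + z I^a u`; the Mittag-Leffler density is the case `b = a`, `z = -λ`, multiplied by `λ`. -/
noncomputable def mittagLefflerKernel (a b z t : ℝ) : ℝ :=
  t ^ (b - 1) * mittagLeffler a b (z * t ^ a)

lemma hasSum_mittagLefflerKernel {a t : ℝ} (ha : 0 < a) (b z : ℝ) (ht : 0 < t) :
    HasSum (fun m : ℕ ↦ z ^ m * fracKernel (a * m + b) t) (mittagLefflerKernel a b z t) := by
  refine ((summable_pow_div_Gamma ha b (z * t ^ a)).hasSum.mul_left (t ^ (b - 1))).congr_fun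
    fun m ↦ ?_
  rw [fracKernel, show a * m + b - 1 = b - 1 + a * m by ring, Real.rpow_add ht,
    Real.rpow_mul ht.le, Real.rpow_natCast, mul_pow]
  ring

lemma mittagLefflerKernel_eq_add {a t : ℝ} (ha : 0 < a) (b z : ℝ) (ht : 0 < t) :
    mittagLefflerKernel a b z t = fracKernel b t + z * mittagLefflerKernel a (b + a) z t := by
  have hshift : HasSum (fun m : ℕ ↦ z ^ (m + 1) * fracKernel (a * (m + 1 : ℕ) + b) t)
      (z * mittagLefflerKernel a (b + a) z t) := by
    refine ((hasSum_mittagLefflerKernel ha (b + a) z ht).mul_left z).congr_fun fun m ↦ ?_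
    push_cast
    ring_nf
  simpa using (hasSum_mittagLefflerKernel ha b z ht).unique
    (hshift.zero_add (f := fun m : ℕ ↦ z ^ m * fracKernel (a * m + b) t))

lemma continuous_mittagLeffler_mul_rpow {a : ℝ} (ha : 0 < a) (b z : ℝ) :
    Continuous fun t : ℝ ↦ mittagLeffler a b (z * t ^ a) :=
  (continuous_mittagLeffler ha b).comp ((Real.continuous_rpow_const ha.le).const_mul z)

lemma continuousOn_mittagLefflerKernel {a : ℝ} (ha : 0 < a) (b z : ℝ) :
    ContinuousOn (mittagLefflerKernel a b z) (Ioi 0) :=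
  (continuousOn_id.rpow_const fun _ ht ↦ .inl (ne_of_gt ht)).mul
    (continuous_mittagLeffler_mul_rpow ha b z).continuousOn

lemma continuous_mittagLefflerKernel {a b : ℝ} (ha : 0 < a) (hb : 1 ≤ b) (z : ℝ) :
    Continuous (mittagLefflerKernel a b z) :=
  (Real.continuous_rpow_const (sub_nonneg.2 hb)).mul (continuous_mittagLeffler_mul_rpow ha b z)

lemma intervalIntegrable_mittagLefflerKernel {a b : ℝ} (ha : 0 < a) (hb : 0 < b) (z x y : ℝ) :
    IntervalIntegrable (mittagLefflerKernel a b z) volume x y :=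
  (intervalIntegral.intervalIntegrable_rpow' (by linarith)).mul_continuousOn
    (continuous_mittagLeffler_mul_rpow ha b z).continuousOn

lemma fracIntegral_mittagLefflerKernel {a b c t : ℝ} (ha : 0 < a) (hb : 0 < b) (hc : 0 < c)
    (z : ℝ) (ht : 0 < t) :
    fracIntegral c (mittagLefflerKernel a b z) t = mittagLefflerKernel a (b + c) z t := by
  have hp (m : ℕ) : 0 < a * m + b := by positivity
  let F (z : ℝ) (m : ℕ) (x : ℝ) : ℝ :=
    z ^ m * (fracKernel (a * m + b) x * fracKernel c (t - x))
  have hF_integral (z : ℝ) (m : ℕ) :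
      ∫ x in Ioc 0 t, F z m x = z ^ m * fracKernel (a * m + (b + c)) t := by
    rw [← intervalIntegral.integral_of_le ht.le, intervalIntegral.integral_const_mul,
      ← fracIntegral, fracIntegral_fracKernel (hp m) hc ht, add_assoc]
  have hF_norm (m : ℕ) : ∫ x in Ioc 0 t, ‖F z m x‖ = ∫ x in Ioc 0 t, F |z| m x := by
    refine setIntegral_congr_fun measurableSet_Ioc fun x hx ↦ ?_
    simp only [F, norm_mul, norm_pow, Real.norm_eq_abs,
      abs_of_nonneg (fracKernel_nonneg (hp m) hx.1.le),
      abs_of_nonneg (fracKernel_nonneg hc (sub_nonneg.2 hx.2))]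
  have hF_integrable (m : ℕ) : IntegrableOn (F z m) (Ioc 0 t) :=
    ((intervalIntegrable_iff_integrableOn_Ioc_of_le ht.le).1
      (intervalIntegrable_fracKernel_mul_fracKernel_sub (hp m) hc ht)).const_mul _
  have hF_summable : Summable fun m ↦ ∫ x in Ioc 0 t, ‖F z m x‖ := by
    simp_rw [hF_norm, hF_integral]
    exact (hasSum_mittagLefflerKernel ha (b + c) |z| ht).summable
  have hsum := hasSum_integral_of_summable_integral_norm hF_integrable hF_summable
  simp_rw [hF_integral] at hsum
  rw [(hasSum_mittagLefflerKernel ha (b + c) z ht).unique hsum, fracIntegral,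
    intervalIntegral.integral_of_le ht.le]
  refine setIntegral_congr_fun measurableSet_Ioc fun x hx ↦ ?_
  exact (((hasSum_mittagLefflerKernel ha b z hx.1).mul_right (fracKernel c (t - x))).congr_fun
    fun m ↦ (mul_assoc _ _ _).symm).tsum_eq.symm

lemma hasDerivAt_mittagLefflerKernel_add_one {a b t : ℝ} (ha : 0 < a) (hb : 0 < b) (z : ℝ)
    (ht : 0 < t) :
    HasDerivAt (mittagLefflerKernel a (b + 1) z) (mittagLefflerKernel a b z t) t := by
  refine (intervalIntegral.integral_hasDerivAt_right
    (intervalIntegrable_mittagLefflerKernel ha hb z 0 t)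
    ((continuousOn_mittagLefflerKernel ha b z).stronglyMeasurableAtFilter isOpen_Ioi t ht)
    ((continuousOn_mittagLefflerKernel ha b z).continuousAt
      (Ioi_mem_nhds ht))).congr_of_eventuallyEq ?_
  filter_upwards [Ioi_mem_nhds ht] with y hy
  rw [← fracIntegral_one, fracIntegral_mittagLefflerKernel ha hb one_pos z hy]

lemma differentiableAt_mittagLefflerKernel_one {a t : ℝ} (ha : 0 < a) (z : ℝ) (ht : 0 < t) :
    DifferentiableAt ℝ (mittagLefflerKernel a 1 z) t := by
  have hderiv := ((hasDerivAt_mittagLefflerKernel_add_one ha ha z ht).const_mul z).const_add 1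
  refine (hderiv.congr_of_eventuallyEq ?_).differentiableAt
  filter_upwards [Ioi_mem_nhds ht] with y hy
  rw [mittagLefflerKernel_eq_add ha 1 z hy, fracKernel_one, add_comm 1 a]

lemma mittagLefflerKernel_one_zero {a : ℝ} (ha : a ≠ 0) (z : ℝ) :
    mittagLefflerKernel a 1 z 0 = 1 := by
  rw [mittagLefflerKernel, mittagLeffler, tsum_eq_single 0 fun m hm ↦ by simp [ha, hm]]
  simp

lemma mittagLefflerKernel_one_nonneg_of_isMinOn {a z t : ℝ} (ha : a ∈ Ioo (0 : ℝ) 1) (hz : z ≤ 0)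
    (ht : 0 < t) (hmin : IsMinOn (mittagLefflerKernel a 1 z) (Icc 0 t) t) :
    0 ≤ mittagLefflerKernel a 1 z t := by
  have hc : 1 - a ∈ Ioc (0 : ℝ) 1 := ⟨sub_pos.2 ha.2, by linarith [ha.1]⟩
  have hderiv : HasDerivAt (fracIntegral (1 - a) (mittagLefflerKernel a 1 z))
      (mittagLefflerKernel a (1 - a) z t) t := by
    refine (hasDerivAt_mittagLefflerKernel_add_one ha.1 hc.1 z ht).congr_of_eventuallyEq ?_
    filter_upwards [Ioi_mem_nhds ht] with y hy
    rw [fracIntegral_mittagLefflerKernel ha.1 one_pos hc.1 z hy, add_comm]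
  have hle := le_mul_fracKernel_of_isMinOn hc ht
    (continuous_mittagLefflerKernel ha.1 le_rfl z).continuousOn hmin
    (differentiableAt_mittagLefflerKernel_one ha.1 z ht).differentiableWithinAt
    hderiv.hasDerivWithinAt
  rw [mittagLefflerKernel_eq_add ha.1 (1 - a) z ht, sub_add_cancel] at hle
  have hφ := fracKernel_pos hc.1 ht
  exact (pos_of_mul_pos_left (b := fracKernel (1 - a) t - z) (by linarith) (by linarith)).le

lemma mittagLefflerKernel_one_nonneg {a z t : ℝ} (ha : a ∈ Ioc (0 : ℝ) 1) (hz : z ≤ 0)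
    (ht : 0 ≤ t) : 0 ≤ mittagLefflerKernel a 1 z t := by
  rcases ha.2.eq_or_lt with rfl | ha1
  · rw [mittagLefflerKernel, mittagLeffler_one_one]
    positivity
  obtain ⟨t₀, ht₀, hmin⟩ := isCompact_Icc.exists_isMinOn (nonempty_Icc.2 ht)
    (continuous_mittagLefflerKernel ha.1 le_rfl z).continuousOn
  refine le_trans ?_ (hmin (right_mem_Icc.2 ht))
  rcases ht₀.1.eq_or_lt with rfl | ht₀_pos
  · rw [mittagLefflerKernel_one_zero ha.1.ne']
    exact zero_le_one
  · exact mittagLefflerKernel_one_nonneg_of_isMinOn ⟨ha.1, ha1⟩ hz ht₀_pos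
      (hmin.on_subset (Icc_subset_Icc_right ht₀.2))

lemma mittagLefflerKernel_nonneg {a b z t : ℝ} (ha : a ∈ Ioc (0 : ℝ) 1) (hb : 1 ≤ b) (hz : z ≤ 0)
    (ht : 0 < t) : 0 ≤ mittagLefflerKernel a b z t := by
  rcases hb.eq_or_lt with rfl | hb1
  · exact mittagLefflerKernel_one_nonneg ha hz ht.le
  · rw [← add_sub_cancel 1 b,
      ← fracIntegral_mittagLefflerKernel ha.1 one_pos (sub_pos.2 hb1) z ht]
    exact fracIntegral_nonneg (sub_pos.2 hb1) ht.le fun x hx ↦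
      mittagLefflerKernel_one_nonneg ha hz hx.1

lemma mittagLefflerKernel_le_fracKernel {a b z t : ℝ} (ha : a ∈ Ioc (0 : ℝ) 1) (hb : 1 ≤ b)
    (hz : z ≤ 0) (ht : 0 < t) : mittagLefflerKernel a b z t ≤ fracKernel b t := by
  rw [mittagLefflerKernel_eq_add ha.1 b z ht]
  have hnext := mittagLefflerKernel_nonneg (b := b + a) ha (by linarith [ha.1]) hz ht
  linarith [mul_nonpos_of_nonpos_of_nonneg hz hnext]

lemma integral_exp_neg_mul_fracKernel {p s : ℝ} (hp : 0 < p) (hs : 0 < s) :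
    ∫ t in Ioi (0 : ℝ), Real.exp (-(s * t)) * fracKernel p t = s ^ (-p) := by
  have hΓ := Real.Gamma_pos_of_pos hp
  simp_rw [fracKernel, mul_div_assoc', mul_comm (Real.exp _)]
  rw [integral_div, Real.integral_rpow_mul_exp_neg_mul_Ioi hp hs, one_div, Real.inv_rpow hs.le,
    ← Real.rpow_neg hs.le, mul_div_cancel_right₀ _ hΓ.ne']

lemma integrableOn_exp_neg_mul_fracKernel {p s : ℝ} (hp : 0 < p) (hs : 0 < s) :
    IntegrableOn (fun t ↦ Real.exp (-(s * t)) * fracKernel p t) (Ioi 0) := by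
  refine .of_integral_ne_zero ?_
  rw [integral_exp_neg_mul_fracKernel hp hs]
  exact (Real.rpow_pos_of_pos hs _).ne'

lemma integral_exp_neg_mul_fracIntegral {c s : ℝ} {f : ℝ → ℝ} (hc : 0 < c) (hs : 0 < s)
    (hf : IntegrableOn (fun t ↦ Real.exp (-(s * t)) * f t) (Ioi 0)) :
    ∫ t in Ioi (0 : ℝ), Real.exp (-(s * t)) * fracIntegral c f t =
      (∫ t in Ioi (0 : ℝ), Real.exp (-(s * t)) * f t) * s ^ (-c) := by
  have hconv := integral_posConvolution hf (integrableOn_exp_neg_mul_fracKernel hc hs)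
    (ContinuousLinearMap.mul ℝ ℝ)
  simp only [ContinuousLinearMap.mul_apply', integral_exp_neg_mul_fracKernel hc hs] at hconv
  rw [← hconv]
  congr 1 with t
  rw [fracIntegral, ← intervalIntegral.integral_const_mul]
  congr 1 with x
  have hexp : Real.exp (-(s * t)) = Real.exp (-(s * x)) * Real.exp (-(s * (t - x))) := by
    rw [← Real.exp_add]
    ring_nf
  rw [hexp]
  ring

lemma integrableOn_exp_neg_mul_mittagLefflerKernel {a b z s : ℝ} (ha : a ∈ Ioc (0 : ℝ) 1)
    (hb : 0 < b) (hz : z ≤ 0) (hs : 0 < s) :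
    IntegrableOn (fun t ↦ Real.exp (-(s * t)) * mittagLefflerKernel a b z t) (Ioi 0) := by
  obtain ⟨n, hn⟩ : ∃ n : ℕ, 1 ≤ b + n * a := by
    obtain ⟨n, hn⟩ := exists_nat_ge (1 / a)
    rw [div_le_iff₀ ha.1] at hn
    exact ⟨n, by linarith⟩
  induction n generalizing b with
  | zero =>
    have hb1 : 1 ≤ b := by simpa using hn
    have hcont := continuous_mittagLefflerKernel ha.1 hb1 z
    refine (integrableOn_exp_neg_mul_fracKernel hb hs).mono' (by fun_prop) ?_
    refine ae_restrict_of_forall_mem measurableSet_Ioi fun t ht ↦ ?_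
    rw [norm_mul, Real.norm_of_nonneg (Real.exp_pos _).le,
      Real.norm_of_nonneg (mittagLefflerKernel_nonneg ha hb1 hz ht)]
    gcongr
    exact mittagLefflerKernel_le_fracKernel ha hb1 hz ht
  | succ n ih =>
    have hnext := ih (b := b + a) (by linarith [ha.1]) (by push_cast at hn; linarith)
    refine ((integrableOn_exp_neg_mul_fracKernel hb hs).add (hnext.const_mul z)).congr_fun
      (fun t ht ↦ ?_) measurableSet_Ioi
    rw [mittagLefflerKernel_eq_add ha.1 b z ht, Pi.add_apply]
    ring

lemma integral_exp_neg_mul_mittagLefflerKernel_eq_add {a b z s : ℝ} (ha : a ∈ Ioc (0 : ℝ) 1)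
    (hb : 0 < b) (hz : z ≤ 0) (hs : 0 < s) :
    ∫ t in Ioi (0 : ℝ), Real.exp (-(s * t)) * mittagLefflerKernel a b z t =
      s ^ (-b) +
        z * ((∫ t in Ioi (0 : ℝ), Real.exp (-(s * t)) * mittagLefflerKernel a b z t) *
          s ^ (-a)) := by
  have hint := integrableOn_exp_neg_mul_mittagLefflerKernel ha hb hz hs
  have hint_add := integrableOn_exp_neg_mul_mittagLefflerKernel ha (add_pos hb ha.1) hz hs
  have hconv : ∫ t in Ioi (0 : ℝ), Real.exp (-(s * t)) * mittagLefflerKernel a (b + a) z t =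
      (∫ t in Ioi (0 : ℝ), Real.exp (-(s * t)) * mittagLefflerKernel a b z t) * s ^ (-a) := by
    rw [← integral_exp_neg_mul_fracIntegral ha.1 hs hint]
    refine setIntegral_congr_fun measurableSet_Ioi fun t ht ↦ ?_
    rw [fracIntegral_mittagLefflerKernel ha.1 hb ha.1 z ht]
  rw [← hconv, ← integral_exp_neg_mul_fracKernel hb hs, ← integral_const_mul,
    ← integral_add (integrableOn_exp_neg_mul_fracKernel hb hs) (hint_add.const_mul z)]
  refine setIntegral_congr_fun measurableSet_Ioi fun t ht ↦ ?_
  rw [mittagLefflerKernel_eq_add ha.1 b z ht]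
  ring

theorem mittagLeffler_density_laplace_general {α β lam s : ℝ} (hα : α ∈ Ioc (0 : ℝ) 1)
    (hβ : 0 < β) (hlam : 0 ≤ lam) (hs : 0 < s) :
    ∫ τ in Ioi (0 : ℝ), Real.exp (-(s * τ)) * (τ ^ (β - 1) * mittagLeffler α β (-(lam * τ ^ α))) =
      s ^ (α - β) / (lam + s ^ α) := by
  have hL := integral_exp_neg_mul_mittagLefflerKernel_eq_add hα hβ (neg_nonpos.2 hlam) hs
  simp only [mittagLefflerKernel, neg_mul] at hL
  have hcancel : s ^ (-α) * s ^ α = 1 := by rw [← Real.rpow_add hs, neg_add_cancel, Real.rpow_zero]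
  rw [eq_div_iff (by positivity), sub_eq_add_neg α β, Real.rpow_add hs]
  linear_combination s ^ α * hL - lam * (∫ τ in Ioi (0 : ℝ),
    Real.exp (-(s * τ)) * (τ ^ (β - 1) * mittagLeffler α β (-(lam * τ ^ α)))) * hcancel

/-- For `α ∈ (0,1]`, `λ > 0`, `s > 0`, the Laplace transform of the Mittag-Leffler
density equals `λ/(λ + s^α)`:
`∫_0^∞ e^{−sτ} λ τ^{α−1} E_{α,α}(−λ τ^α) dτ = λ/(λ + s^α)`. -/
theorem mittagLeffler_density_laplace (α lam s : ℝ)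
    (hα : α ∈ Set.Ioc (0 : ℝ) 1) (hlam : 0 < lam) (hs : 0 < s) :
    (∫ τ in Set.Ioi (0 : ℝ),
        Real.exp (-(s * τ)) * (lam * τ ^ (α - 1) * mittagLeffler α α (-(lam * τ ^ α))))
      = lam / (lam + s ^ α) := by
  simp_rw [mul_assoc lam, mul_left_comm _ lam]
  rw [integral_const_mul, mittagLeffler_density_laplace_general hα hα.1 hlam.le hs, sub_self,
    Real.rpow_zero, mul_one_div]
end

section
/- Let α ∈ (0,1], 0 < λ < 1 and n ≥ 1 an integer. Then the series Σ_{m=0}^∞ (−λ)^m [ (α(m+1))_n − (αm)_n ] converges absolutely, and the n-th Taylor coefficient at u = 0 of the function u ↦ λ(1 − (1−u)^α)/(λ + (1−u)^α) equals (λ/n!) Σ_{m=0}^∞ (−λ)^m [ (α(m+1))_n − (αm)_n ]. -/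
open Polynomial

/-!
Write `w = (1 - u) ^ α`. Near `u = 0` the geometric series in `-λ / w` gives
`λ (1 - w) / (λ + w) = λ ∑ₘ (-λ) ^ m (w ^ (-(m + 1)) - w ^ (-m))`,
and the binomial series expands `w ^ (-m) = (1 - u) ^ (-α m)` as `∑ₙ (α m)ₙ / n! uⁿ`.
The two summations may be exchanged: since `|(a)ₙ| ≤ (|a|)ₙ`, the `m`-th row of the double series
sums absolutely to at most `|λ| ^ m (1 - |u|) ^ (-|α| m)`, which is geometric.
The Taylor coefficients are then read off by uniqueness of power series.
-/

open Topology

lemma norm_ascPochhammer_eval_le {R : Type*} [SeminormedRing R] [NormOneClass R] (n : ℕ) (x : R) :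
    ‖(ascPochhammer R n).eval x‖ ≤ (ascPochhammer ℝ n).eval ‖x‖ := by
  induction n with
  | zero => simp
  | succ n ih =>
    have hfactor : ‖x + n‖ ≤ ‖x‖ + n :=
      (norm_add_le _ _).trans (by simpa using Nat.norm_cast_le (α := R) n)
    rw [ascPochhammer_succ_eval, ascPochhammer_succ_eval]
    exact (norm_mul_le _ _).trans
      (mul_le_mul ih hfactor (norm_nonneg _) ((norm_nonneg _).trans ih))

lemma summable_eval_natCast_mul_pow {R : Type*} [NormedRing R] [HasSummableGeomSeries R]
    (p : R[X]) {r : R} (hr : ‖r‖ < 1) : Summable fun m : ℕ => p.eval (m : R) * r ^ m := by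
  induction p using Polynomial.induction_on' with
  | add p q hp hq => simpa only [eval_add, add_mul] using hp.add hq
  | monomial k a =>
    simpa only [eval_monomial, mul_assoc] using
      (summable_pow_mul_geometric_of_norm_lt_one k hr).mul_left a

lemma summable_pow_mul_ascPochhammer_eval {R : Type*} [NormedCommRing R] [HasSummableGeomSeries R]
    (α β : R) {r : R} (hr : ‖r‖ < 1) (n : ℕ) :
    Summable fun m : ℕ => r ^ m * (ascPochhammer R n).eval (α * m + β) := by
  refine (summable_eval_natCast_mul_pow
    ((ascPochhammer R n).comp (C α * X + C β)) hr).congr fun m => ?_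
  simp only [eval_comp, eval_add, eval_mul, eval_C, eval_X, mul_comm]

lemma iteratedDeriv_eq_factorial_mul_of_hasSum {𝕜 : Type*} [NontriviallyNormedField 𝕜]
    [CompleteSpace 𝕜] [CharZero 𝕜] {f : 𝕜 → 𝕜} {x : 𝕜} {c : ℕ → 𝕜}
    (h : ∀ᶠ u in 𝓝 0, HasSum (fun n => c n * u ^ n) (f (x + u))) (n : ℕ) :
    iteratedDeriv n f x = n.factorial * c n := by
  have hf : HasFPowerSeriesAt f (.ofScalars 𝕜 c) x := by
    simpa [hasFPowerSeriesAt_iff, mul_comm] using h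
  have hcoeff := congrArg (fun p => p.coeff n)
    (hf.analyticAt.hasFPowerSeriesAt.eq_formalMultilinearSeries hf)
  simp only [FormalMultilinearSeries.coeff_ofScalars] at hcoeff
  rw [← hcoeff, mul_div_cancel₀ _ (Nat.cast_ne_zero.2 n.factorial_ne_zero)]

lemma ringChoose_add_sub_one_eq_ascPochhammer_eval_div {K : Type*} [Field K]
    [BinomialRing K] (a : K) (n : ℕ) :
    Ring.choose (a + n - 1) n = (ascPochhammer K n).eval a / n.factorial := by
  have : IsAddTorsionFree K := BinomialRing.toIsAddTorsionFree
  have : CharZero K := .of_isAddTorsionFree K K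
  rw [eq_div_iff (Nat.cast_ne_zero.2 n.factorial_ne_zero), Ring.choose,
    show a + n - 1 - n + 1 = a by ring, ← ascPochhammer_smeval_eq_eval,
    ← Ring.factorial_nsmul_multichoose_eq_ascPochhammer, nsmul_eq_mul, mul_comm]

lemma hasSum_one_sub_rpow_neg (a : ℝ) {u : ℝ} (hu : |u| < 1) :
    HasSum (fun n : ℕ => (ascPochhammer ℝ n).eval a / n.factorial * u ^ n) ((1 - u) ^ (-a)) := by
  have hpos : 0 < 1 - u := sub_pos.2 (abs_lt.1 hu).2
  have hmem : u ∈ Metric.eball (0 : ℝ) 1 := by simpa [enorm_eq_nnnorm] using! hu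
  simpa [Real.rpow_neg hpos.le, ringChoose_add_sub_one_eq_ascPochhammer_eval_div, mul_comm]
    using (Real.one_div_one_sub_rpow_hasFPowerSeriesOnBall_zero a).hasSum hmem

lemma abs_ascPochhammer_eval_div_factorial_mul_pow_le (a u : ℝ) (n : ℕ) :
    |(ascPochhammer ℝ n).eval a / n.factorial * u ^ n| ≤
      (ascPochhammer ℝ n).eval |a| / n.factorial * |u| ^ n := by
  rw [abs_mul, abs_div, abs_pow, Nat.abs_cast]
  gcongr
  exact norm_ascPochhammer_eval_le n a

lemma one_sub_rpow_neg_le_one_sub_abs_rpow_neg_abs (a : ℝ) {u : ℝ} (hu : |u| < 1) :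
    (1 - u) ^ (-a) ≤ (1 - |u|) ^ (-|a|) :=
  hasSum_le (fun n => (le_abs_self _).trans (abs_ascPochhammer_eval_div_factorial_mul_pow_le a u n))
    (hasSum_one_sub_rpow_neg a hu)
    (hasSum_one_sub_rpow_neg |a| ((abs_abs u).trans_lt hu))

section DoubleSeries

variable {ι : Type*} {c a : ι → ℝ} {u : ℝ}

lemma summable_mul_binomialSeries (hu : |u| < 1)
    (hsum : Summable fun i => |c i| * (1 - |u|) ^ (-|a i|)) :
    Summable fun p : ι × ℕ =>
      c p.1 * ((ascPochhammer ℝ p.2).eval (a p.1) / p.2.factorial * u ^ p.2) := by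
  have hrow (i : ι) := (hasSum_one_sub_rpow_neg |a i|
    ((abs_abs u).trans_lt hu)).mul_left |c i|
  have hbound (p : ι × ℕ) :
      ‖c p.1 * ((ascPochhammer ℝ p.2).eval (a p.1) / p.2.factorial * u ^ p.2)‖ ≤
        |c p.1| * ((ascPochhammer ℝ p.2).eval |a p.1| / p.2.factorial * |u| ^ p.2) := by
    rw [Real.norm_eq_abs, abs_mul]
    gcongr
    exact abs_ascPochhammer_eval_div_factorial_mul_pow_le _ _ _
  refine .of_norm_bounded ((summable_prod_of_nonneg fun p => ?_).2
    ⟨fun i => (hrow i).summable, ?_⟩) hbound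
  · exact (norm_nonneg _).trans (hbound p)
  · simpa only [(hrow _).tsum_eq] using hsum

lemma hasSum_tsum_mul_one_sub_rpow_neg (hu : |u| < 1)
    (hsum : Summable fun i => |c i| * (1 - |u|) ^ (-|a i|)) :
    HasSum (fun n : ℕ => (∑' i, c i * (ascPochhammer ℝ n).eval (a i)) / n.factorial * u ^ n)
      (∑' i, c i * (1 - u) ^ (-a i)) := by
  have hdouble := summable_mul_binomialSeries hu hsum
  have hrows := hdouble.hasSum.prod_fiberwise fun i =>
    (hasSum_one_sub_rpow_neg (a i) hu).mul_left (c i)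
  have hcols := ((Equiv.prodComm ℕ ι).hasSum_iff.2 hdouble.hasSum).prod_fiberwise fun n =>
    (hdouble.prod_symm.prod_factor n).hasSum
  rw [hrows.tsum_eq]
  refine hcols.congr_fun fun n => ?_
  rw [← tsum_div_const, ← tsum_mul_right]
  exact tsum_congr fun i => by simp only [Prod.swap]; ring

end DoubleSeries

section Geometric

variable {α u z : ℝ}

lemma tsum_pow_mul_one_sub_rpow_neg (β : ℝ) (hu : |u| < 1) (hz : |z| * (1 - |u|) ^ (-|α|) < 1) :
    ∑' m : ℕ, z ^ m * (1 - u) ^ (-(α * m + β)) =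
      (1 - u) ^ (-β) / (1 - z * (1 - u) ^ (-α)) := by
  have hpos : 0 < 1 - u := sub_pos.2 (abs_lt.1 hu).2
  have hratio : ‖z * (1 - u) ^ (-α)‖ < 1 := by
    rw [norm_mul, Real.norm_of_nonneg (Real.rpow_nonneg hpos.le _)]
    exact (mul_le_mul_of_nonneg_left (one_sub_rpow_neg_le_one_sub_abs_rpow_neg_abs α hu)
      (norm_nonneg z)).trans_lt hz
  rw [div_eq_mul_inv, ← tsum_geometric_of_norm_lt_one hratio, ← tsum_mul_left]
  refine tsum_congr fun m => ?_
  rw [neg_add, ← neg_mul, Real.rpow_add hpos, Real.rpow_mul_natCast hpos.le]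
  ring

lemma summable_abs_pow_mul_one_sub_abs_rpow_neg (β : ℝ) (hu : |u| < 1)
    (hz : |z| * (1 - |u|) ^ (-|α|) < 1) :
    Summable fun m : ℕ => |z ^ m| * (1 - |u|) ^ (-|α * m + β|) := by
  have hpos : 0 < 1 - |u| := sub_pos.2 hu
  have hgeom := (summable_geometric_of_lt_one (by positivity) hz).mul_left ((1 - |u|) ^ (-|β|))
  refine .of_nonneg_of_le (fun m => by positivity) (fun m => ?_) hgeom
  calc |z ^ m| * (1 - |u|) ^ (-|α * m + β|)
      ≤ |z ^ m| * (1 - |u|) ^ (-|α| * m + -|β|) := by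
        refine mul_le_mul_of_nonneg_left (Real.rpow_le_rpow_of_exponent_ge hpos (by simp) ?_)
          (abs_nonneg _)
        have hexp : |α * m + β| ≤ |α| * m + |β| := by
          simpa only [abs_mul, Nat.abs_cast] using abs_add_le (α * m) β
        linarith
    _ = (1 - |u|) ^ (-|β|) * (|z| * (1 - |u|) ^ (-|α|)) ^ m := by
        rw [Real.rpow_add hpos, Real.rpow_mul_natCast hpos.le, abs_pow]
        ring

lemma hasSum_one_sub_rpow_neg_div_one_sub_mul_rpow_neg (β : ℝ) (hu : |u| < 1)
    (hz : |z| * (1 - |u|) ^ (-|α|) < 1) :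
    HasSum (fun n : ℕ =>
        (∑' m : ℕ, z ^ m * (ascPochhammer ℝ n).eval (α * m + β)) / n.factorial * u ^ n)
      ((1 - u) ^ (-β) / (1 - z * (1 - u) ^ (-α))) :=
  tsum_pow_mul_one_sub_rpow_neg β hu hz ▸
    hasSum_tsum_mul_one_sub_rpow_neg hu (summable_abs_pow_mul_one_sub_abs_rpow_neg β hu hz)

end Geometric

lemma eventually_mul_one_sub_abs_rpow_lt_one (a : ℝ) {c : ℝ} (hc : c < 1) :
    ∀ᶠ u : ℝ in 𝓝 0, c * (1 - |u|) ^ a < 1 := by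
  have hcont : ContinuousAt (fun u : ℝ => c * (1 - |u|) ^ a) 0 :=
    continuousAt_const.mul ((by fun_prop : ContinuousAt (fun u : ℝ => 1 - |u|) 0).rpow_const
      (.inl (by simp)))
  exact hcont.eventually_lt_const (by simpa using hc)

lemma mul_one_sub_div_add_eq_mul_inv_div_sub {K : Type*} [Field K] (l : K) {w : K} (hw : w ≠ 0) :
    l * (1 - w) / (l + w) = l * (w⁻¹ / (1 - -l * w⁻¹) - 1 / (1 - -l * w⁻¹)) := by
  have hden : 1 - -l * w⁻¹ = (l + w) / w := by field_simp; ring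
  rw [hden, ← sub_div, div_div_eq_mul_div, sub_mul, inv_mul_cancel₀ hw, one_mul, mul_div_assoc]

lemma eventually_hasSum_mittagLeffler_generatingFunction (α : ℝ) {lam : ℝ} (hlam : |lam| < 1) :
    ∀ᶠ u : ℝ in 𝓝 0, HasSum (fun n : ℕ => lam / n.factorial * (∑' m : ℕ, (-lam) ^ m *
        ((ascPochhammer ℝ n).eval (α * ((m : ℝ) + 1)) - (ascPochhammer ℝ n).eval (α * m))) * u ^ n)
      (lam * (1 - (1 - u) ^ α) / (lam + (1 - u) ^ α)) := by
  have hz : |-lam| < 1 := (abs_neg lam).trans_lt hlam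
  have hsmall : ∀ᶠ u : ℝ in 𝓝 0, |u| < 1 :=
    continuous_abs.continuousAt.eventually_lt_const (by simp)
  filter_upwards [hsmall, eventually_mul_one_sub_abs_rpow_lt_one (-|α|) hz] with u hu hgeom
  have hpos : 0 < 1 - u := sub_pos.2 (abs_lt.1 hu).2
  have hdiff := ((hasSum_one_sub_rpow_neg_div_one_sub_mul_rpow_neg α hu hgeom).sub
    (hasSum_one_sub_rpow_neg_div_one_sub_mul_rpow_neg 0 hu hgeom)).mul_left lam
  rw [Real.rpow_neg hpos.le, neg_zero, Real.rpow_zero,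
    ← mul_one_sub_div_add_eq_mul_inv_div_sub lam (Real.rpow_pos_of_pos hpos α).ne'] at hdiff
  refine hdiff.congr_fun fun n => ?_
  simp_rw [mul_sub, mul_add, mul_one]
  rw [(summable_pow_mul_ascPochhammer_eval α α hz n).tsum_sub
    (by simpa using summable_pow_mul_ascPochhammer_eval α 0 hz n)]
  simp only [add_zero]
  ring

theorem mittagLeffler_transition_matrix_entries_general (α : ℝ) {lam : ℝ} (hlam : |lam| < 1)
    (n : ℕ) :
    Summable (fun m : ℕ => |(-lam) ^ m *
        ((ascPochhammer ℝ n).eval (α * ((m : ℝ) + 1)) - (ascPochhammer ℝ n).eval (α * m))|) ∧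
    1 / (n.factorial : ℝ) *
        iteratedDeriv n (fun u : ℝ => lam * (1 - (1 - u) ^ α) / (lam + (1 - u) ^ α)) 0 =
      lam / n.factorial * ∑' m : ℕ, (-lam) ^ m *
        ((ascPochhammer ℝ n).eval (α * ((m : ℝ) + 1)) - (ascPochhammer ℝ n).eval (α * m)) := by
  have hz : |-lam| < 1 := (abs_neg lam).trans_lt hlam
  constructor
  · simpa [mul_sub, mul_add] using ((summable_pow_mul_ascPochhammer_eval α α hz n).sub
      (summable_pow_mul_ascPochhammer_eval α 0 hz n)).abs
  · rw [iteratedDeriv_eq_factorial_mul_of_hasSum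
      (by simpa only [zero_add] using eventually_hasSum_mittagLeffler_generatingFunction α hlam),
      ← mul_assoc, one_div_mul_cancel (Nat.cast_ne_zero.2 n.factorial_ne_zero), one_mul]

/-- For `α ∈ (0,1]`, `0 < λ < 1` and `n ≥ 1`: the series
`Σ_{m=0}^∞ (−λ)^m [(α(m+1))_n − (αm)_n]` converges absolutely, and the `n`-th Taylor
coefficient at `u = 0` of `u ↦ λ(1 − (1−u)^α)/(λ + (1−u)^α)` equals
`(λ/n!) Σ_{m=0}^∞ (−λ)^m [(α(m+1))_n − (αm)_n]`. -/
theorem mittagLeffler_transition_matrix_entries (α lam : ℝ) (n : ℕ)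
    (hα : α ∈ Set.Ioc (0 : ℝ) 1) (hlam : lam ∈ Set.Ioo (0 : ℝ) 1) (hn : 1 ≤ n) :
    Summable (fun m : ℕ => |(-lam) ^ m *
        ((ascPochhammer ℝ n).eval (α * ((m : ℝ) + 1)) - (ascPochhammer ℝ n).eval (α * (m : ℝ)))|) ∧
    (1 / (n.factorial : ℝ)) * iteratedDeriv n
        (fun u : ℝ => lam * (1 - (1 - u) ^ α) / (lam + (1 - u) ^ α)) 0
      = (lam / (n.factorial : ℝ)) * ∑' m : ℕ, (-lam) ^ m *
          ((ascPochhammer ℝ n).eval (α * ((m : ℝ) + 1)) - (ascPochhammer ℝ n).eval (α * (m : ℝ))) := by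
  exact mittagLeffler_transition_matrix_entries_general α
    ((abs_of_pos hlam.1).trans_lt hlam.2) n
end

section
/- Let β ∈ (0,1] and x ≥ 0. For every integer n ≥ 0, the n-th Taylor coefficient at u = 0 of the function u ↦ E_β(−x(1−u)) equals p_n := (x^n/n!) Σ_{m=0}^∞ ((m+n)!/m!) (−x)^m / Γ(β(m+n) + 1), and the resulting fractional Poisson state probabilities are normalized: Σ_{n=0}^∞ p_n = 1. -/
/-- Mittag-Leffler function `E_β(z) = Σ_{m=0}^∞ z^m / Γ(β m + 1)`. -/
noncomputable def mittagLefflerOne (β z : ℝ) : ℝ :=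
  ∑' m : ℕ, z ^ m / Real.Gamma (β * m + 1)

/-!
For `β > 0` the bound `R ^ s * exp (-R) ≤ Γ(s + 1)` makes the Mittag-Leffler series converge
absolutely on the whole line, so by the binomial theorem it may be rearranged into a power series
in `u` at the point `-x + x * u = -(x * (1 - u))`. The rearranged coefficients are the state
probabilities: `E_β(-x(1 - u))` is their generating function. Uniqueness of power series
coefficients gives the Taylor coefficients, and `u = 1` gives the normalization, as `E_β(0) = 1`.
-/

open Filter Finset Topology

section PowerSeries

variable {𝕜 E : Type*} [NormedAddCommGroup E]

theorem sum_antidiagonal_pow_smul_choose_smul {R M : Type*} [CommSemiring R] [AddCommMonoid M]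
    [Module R M] (a : ℕ → M) (v w : R) (k : ℕ) :
    ∑ p ∈ antidiagonal k, w ^ p.1 • (((p.1 + p.2).choose p.1 : R) * v ^ p.2) • a (p.1 + p.2) =
      (w + v) ^ k • a k := by
  rw [(Commute.all w v).add_pow', sum_smul]
  refine sum_congr rfl fun p hp => ?_
  rw [mem_antidiagonal.mp hp, smul_smul, nsmul_eq_mul, mul_left_comm]

theorem summable_pow_smul_choose_smul [NormedField 𝕜] [NormedSpace 𝕜 E] [CompleteSpace E]
    {a : ℕ → E} {v w : 𝕜} (ha : Summable fun k => (‖w‖ + ‖v‖) ^ k * ‖a k‖) :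
    Summable fun p : ℕ × ℕ =>
      w ^ p.1 • (((p.1 + p.2).choose p.1 : 𝕜) * v ^ p.2) • a (p.1 + p.2) := by
  let bound : ℕ × ℕ → ℝ := fun p =>
    ‖w‖ ^ p.1 • (((p.1 + p.2).choose p.1 : ℝ) * ‖v‖ ^ p.2) • ‖a (p.1 + p.2)‖
  have bound_nonneg (p : ℕ × ℕ) : 0 ≤ bound p := by
    dsimp only [bound]
    positivity
  have summable_bound : Summable bound := by
    refine HasAntidiagonal.sigmaAntidiagonalEquivProd.summable_iff.mp <|
      (summable_sigma_of_nonneg fun _ => bound_nonneg _).mpr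
        ⟨fun _ => (hasSum_fintype _).summable, ha.congr fun k => ?_⟩
    rw [tsum_fintype, ← smul_eq_mul,
      ← sum_antidiagonal_pow_smul_choose_smul fun k => ‖a k‖]
    exact (sum_coe_sort (antidiagonal k) bound).symm
  refine summable_bound.of_norm_bounded fun p => ?_
  have norm_choose_le : ‖((p.1 + p.2).choose p.1 : 𝕜)‖ ≤ (p.1 + p.2).choose p.1 := by
    simpa only [norm_one, mul_one] using Nat.norm_cast_le (α := 𝕜) ((p.1 + p.2).choose p.1)
  rw [norm_smul, norm_smul, norm_mul, norm_pow, norm_pow]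
  simp only [bound, smul_eq_mul]
  gcongr

theorem hasSum_pow_smul_tsum_choose_smul [NormedField 𝕜] [NormedSpace 𝕜 E] [CompleteSpace E]
    {a : ℕ → E} {v w : 𝕜} (ha : Summable fun k => (‖w‖ + ‖v‖) ^ k * ‖a k‖) :
    HasSum (fun n => w ^ n • ∑' m, (((n + m).choose n : 𝕜) * v ^ m) • a (n + m))
      (∑' k, (w + v) ^ k • a k) := by
  have summable_double := summable_pow_smul_choose_smul ha
  have diagonals :=
    HasAntidiagonal.sigmaAntidiagonalEquivProd.hasSum_iff.mpr summable_double.hasSum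
  have total : ∑' p : ℕ × ℕ, w ^ p.1 • (((p.1 + p.2).choose p.1 : 𝕜) * v ^ p.2) • a (p.1 + p.2) =
      ∑' k, (w + v) ^ k • a k := by
    refine (diagonals.sigma fun k => ?_).tsum_eq.symm
    rw [← sum_antidiagonal_pow_smul_choose_smul, ← sum_coe_sort]
    exact hasSum_fintype _
  rw [← total]
  simpa only [tsum_const_smul''] using
    summable_double.hasSum.prod_fiberwise fun n => (summable_double.prod_factor n).hasSum

theorem iteratedDeriv_eq_factorial_smul_of_hasSum [NontriviallyNormedField 𝕜] [NormedSpace 𝕜 E]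
    [CompleteSpace E] {f : 𝕜 → E} {c : ℕ → E} {z : 𝕜}
    (h : ∀ᶠ w in 𝓝 0, HasSum (fun n => w ^ n • c n) (f (z + w))) (n : ℕ) :
    iteratedDeriv n f z = n.factorial • c n := by
  let p : FormalMultilinearSeries 𝕜 𝕜 E := fun n =>
    ContinuousMultilinearMap.mkPiRing 𝕜 (Fin n) (c n)
  have p_coeff (n : ℕ) : p.coeff n = c n := by simp [p, FormalMultilinearSeries.coeff]
  obtain ⟨r, hp⟩ : HasFPowerSeriesAt f p z := by
    simpa only [hasFPowerSeriesAt_iff, p_coeff] using h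
  rw [iteratedDeriv_eq_iteratedFDeriv, ← hp.factorial_smul 1 n]
  exact congrArg (n.factorial • ·) (p_coeff n)

end PowerSeries

section MittagLeffler

open MeasureTheory Set in
theorem rpow_mul_exp_neg_le_Gamma_add_one {R s : ℝ} (hR : 0 ≤ R) (hs : 0 ≤ s) :
    R ^ s * Real.exp (-R) ≤ Real.Gamma (s + 1) := by
  have integrableOn_Gamma : IntegrableOn (fun t => Real.exp (-t) * t ^ s) (Ioi 0) := by
    simpa only [add_sub_cancel_right] using Real.GammaIntegral_convergent (by linarith : 0 < s + 1)
  have Ioi_subset : Ioi R ⊆ Ioi 0 := Ioi_subset_Ioi hR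
  calc R ^ s * Real.exp (-R)
      = ∫ t in Ioi R, R ^ s * Real.exp (-t) := by
        rw [integral_const_mul, integral_exp_neg_Ioi]
    _ ≤ ∫ t in Ioi R, Real.exp (-t) * t ^ s := by
        refine setIntegral_mono_on ((integrableOn_exp_neg_Ioi R).const_mul _)
          (integrableOn_Gamma.mono_set Ioi_subset) measurableSet_Ioi fun t ht => ?_
        rw [mul_comm]
        gcongr
        exact ht.le
    _ ≤ ∫ t in Ioi 0, Real.exp (-t) * t ^ s := by
        refine setIntegral_mono_set integrableOn_Gamma ?_ Ioi_subset.eventuallyLE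
        filter_upwards [ae_restrict_mem measurableSet_Ioi] with t ht
        exact mul_nonneg (Real.exp_nonneg _) (Real.rpow_nonneg ht.le _)
    _ = Real.Gamma (s + 1) := by
        rw [Real.Gamma_eq_integral (by linarith), add_sub_cancel_right]

variable {β : ℝ}

theorem summable_pow_mul_norm_inv_Gamma (hβ : 0 < β) (r : ℝ) :
    Summable fun k : ℕ => r ^ k * ‖(Real.Gamma (β * k + 1))⁻¹‖ := by
  obtain ⟨R, hr, hR⟩ : ∃ R : ℝ, |r| < R ^ β ∧ 0 < R :=
    (((tendsto_rpow_atTop hβ).eventually_gt_atTop |r|).and (eventually_gt_atTop 0)).exists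
  have summable_geometric : Summable fun k : ℕ => Real.exp R * (|r| / R ^ β) ^ k :=
    (summable_geometric_of_lt_one (by positivity)
      ((div_lt_one (by positivity)).mpr hr)).mul_left _
  refine summable_geometric.of_norm_bounded fun k => ?_
  have Gamma_pos : 0 < Real.Gamma (β * k + 1) := Real.Gamma_pos_of_pos (by positivity)
  have le_Gamma : (R ^ β) ^ k * Real.exp (-R) ≤ Real.Gamma (β * k + 1) := by
    rw [← Real.rpow_mul_natCast hR.le]
    exact rpow_mul_exp_neg_le_Gamma_add_one hR.le (by positivity)
  calc ‖r ^ k * ‖(Real.Gamma (β * k + 1))⁻¹‖‖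
      = |r| ^ k * (Real.Gamma (β * k + 1))⁻¹ := by
        rw [norm_mul, norm_norm, norm_pow, Real.norm_eq_abs,
          Real.norm_of_nonneg (inv_nonneg.mpr Gamma_pos.le)]
    _ ≤ |r| ^ k * ((R ^ β) ^ k * Real.exp (-R))⁻¹ := by gcongr
    _ = Real.exp R * (|r| / R ^ β) ^ k := by
        rw [Real.exp_neg, mul_inv, inv_inv, div_pow]
        ring

theorem mittagLefflerOne_zero (β : ℝ) : mittagLefflerOne β 0 = 1 := by
  rw [mittagLefflerOne, tsum_eq_single 0 fun m hm => by rw [zero_pow hm, zero_div]]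
  simp

theorem hasSum_mittagLefflerOne_add (hβ : 0 < β) (w v : ℝ) :
    HasSum (fun n : ℕ => w ^ n * ∑' m : ℕ,
        ((n + m).choose n : ℝ) * v ^ m / Real.Gamma (β * (n + m : ℕ) + 1))
      (mittagLefflerOne β (w + v)) := by
  simpa only [mittagLefflerOne, div_eq_mul_inv, smul_eq_mul] using
    hasSum_pow_smul_tsum_choose_smul (summable_pow_mul_norm_inv_Gamma hβ (‖w‖ + ‖v‖))

/-- The probability `p_n` that a fractional Poisson process is in state `n`, as a function of the
single parameter `x` (`x = λ t ^ β` for the process of rate `λ` at time `t`). The formula is kept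
for all real `β` and `x`, where it need not be a probability. -/
noncomputable def fractionalPoissonProb (β x : ℝ) (n : ℕ) : ℝ :=
  (x ^ n / (n.factorial : ℝ)) * ∑' m : ℕ,
    (((m + n).factorial : ℝ) / (m.factorial : ℝ)) * (-x) ^ m /
      Real.Gamma (β * ((m : ℝ) + (n : ℝ)) + 1)

theorem fractionalPoissonProb_eq_pow_mul_tsum_choose (β x : ℝ) (n : ℕ) :
    fractionalPoissonProb β x n = x ^ n * ∑' m : ℕ,
      ((n + m).choose n : ℝ) * (-x) ^ m / Real.Gamma (β * (n + m : ℕ) + 1) := by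
  rw [fractionalPoissonProb, div_mul_eq_mul_div, mul_div_assoc, ← tsum_div_const]
  congr! 3 with m
  rw [Nat.add_comm m n, Nat.cast_add_choose, Nat.cast_add, add_comm (m : ℝ)]
  field_simp

theorem hasSum_pow_mul_fractionalPoissonProb (hβ : 0 < β) (x u : ℝ) :
    HasSum (fun n => u ^ n * fractionalPoissonProb β x n)
      (mittagLefflerOne β (-(x * (1 - u)))) := by
  have argument_eq : -(x * (1 - u)) = u * x + -x := by ring
  simpa only [argument_eq, fractionalPoissonProb_eq_pow_mul_tsum_choose, mul_pow, mul_assoc]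
    using hasSum_mittagLefflerOne_add hβ (u * x) (-x)

theorem fractional_poisson_state_probabilities_general (hβ : 0 < β) (x : ℝ) :
    (∀ n : ℕ, (1 / (n.factorial : ℝ)) * iteratedDeriv n
        (fun u : ℝ => mittagLefflerOne β (-(x * (1 - u)))) 0 = fractionalPoissonProb β x n) ∧
      HasSum (fractionalPoissonProb β x) 1 := by
  refine ⟨fun n => ?_, ?_⟩
  · rw [iteratedDeriv_eq_factorial_smul_of_hasSum (c := fractionalPoissonProb β x)
      (.of_forall fun u => by
        simpa only [zero_add, smul_eq_mul] using hasSum_pow_mul_fractionalPoissonProb hβ x u),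
      nsmul_eq_mul, ← mul_assoc, one_div_mul_cancel (by positivity), one_mul]
  · simpa only [one_pow, one_mul, sub_self, mul_zero, neg_zero, mittagLefflerOne_zero]
      using hasSum_pow_mul_fractionalPoissonProb hβ x 1

end MittagLeffler

/-- For `β ∈ (0,1]` and `x ≥ 0`: the `n`-th Taylor coefficient at `u = 0` of
`u ↦ E_β(−x(1−u))` equals
`p_n = (x^n/n!) Σ_{m=0}^∞ ((m+n)!/m!)(−x)^m/Γ(β(m+n)+1)`,
and the fractional Poisson state probabilities are normalized: `Σ_{n=0}^∞ p_n = 1`. -/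
theorem fractional_poisson_state_probabilities (β x : ℝ)
    (hβ : β ∈ Set.Ioc (0 : ℝ) 1) (hx : 0 ≤ x) :
    (∀ n : ℕ, (1 / (n.factorial : ℝ)) * iteratedDeriv n
        (fun u : ℝ => mittagLefflerOne β (-(x * (1 - u)))) 0
      = (x ^ n / (n.factorial : ℝ)) * ∑' m : ℕ,
          (((m + n).factorial : ℝ) / (m.factorial : ℝ)) * (-x) ^ m /
            Real.Gamma (β * ((m : ℝ) + (n : ℝ)) + 1)) ∧
    (∑' n : ℕ, (x ^ n / (n.factorial : ℝ)) * ∑' m : ℕ,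
        (((m + n).factorial : ℝ) / (m.factorial : ℝ)) * (-x) ^ m /
          Real.Gamma (β * ((m : ℝ) + (n : ℝ)) + 1)) = 1 := by
  obtain ⟨taylor_coeff, hasSum_one⟩ := fractional_poisson_state_probabilities_general hβ.1 x
  exact ⟨taylor_coeff, hasSum_one.tsum_eq⟩
end

section
/- Let α ∈ (0,1), 0 < λ < 1, and m, n ≥ 0 integers. Then the series Σ_{s=0}^∞ ((m)_s (−λ)^s / s!) · (αs)_n converges absolutely, and the n-th Taylor coefficient at u = 0 of the function u ↦ (1 + λ(1−u)^{−α})^{−m} equals (1/n!) Σ_{s=0}^∞ ((m)_s (−λ)^s / s!) · (αs)_n (a discrete approximation of the Prabhakar kernel). -/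
open Polynomial

/-!
With `(a)ₙ` the Pochhammer symbol, the binomial series is `(1 - x) ^ (-a) = ∑ₙ (a)ₙ / n! * xⁿ`
for `|x| < 1`. Applied with `x = -λ (1 - u) ^ (-α)` it writes the kernel as a sum over `s` of
multiples of `(1 - u) ^ (-(α * s))`, and applied again with `x = u` it expands each of these powers
in `u`. Since `|(a)ₙ| ≤ (|a|)ₙ`, the double series is dominated by the same one with `|α|` and
`|u|` in place of `α` and `u` and with absolute values elsewhere. Its sums over `n`
are `(1 - |u|) ^ (-(|α| * s))`, and `|λ| (1 - |u|) ^ (-|α|) < 1` for small `u`, so it converges.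
Hence the two summations may be interchanged, and the Taylor coefficients can be read off.
-/

open Filter Topology

theorem iteratedDeriv_eq_factorial_smul_coeff {𝕜 E : Type*} [NontriviallyNormedField 𝕜]
    [NormedAddCommGroup E] [NormedSpace 𝕜 E] [CompleteSpace E] {f : 𝕜 → E}
    {p : FormalMultilinearSeries 𝕜 𝕜 E} {x : 𝕜} (hf : HasFPowerSeriesAt f p x) (n : ℕ) :
    iteratedDeriv n f x = n.factorial • p.coeff n := by
  obtain ⟨r, hr⟩ := hf
  exact (hr.factorial_smul 1 n).symm

theorem abs_ascPochhammer_eval_le {R : Type*} [CommRing R] [LinearOrder R] [IsStrictOrderedRing R]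
    (a : R) (n : ℕ) : |(ascPochhammer R n).eval a| ≤ (ascPochhammer R n).eval |a| := by
  induction n with
  | zero => simp
  | succ n ih =>
    have hfactor : |a + n| ≤ |a| + n := by simpa using abs_add_le a n
    rw [ascPochhammer_succ_eval, ascPochhammer_succ_eval, abs_mul]
    exact mul_le_mul ih hfactor (abs_nonneg _) ((abs_nonneg _).trans ih)

theorem multichoose_eq_ascPochhammer_eval_div_factorial {K : Type*} [Field K] [CharZero K]
    [BinomialRing K] (a : K) (n : ℕ) :
    Ring.multichoose a n = (ascPochhammer K n).eval a / n.factorial := by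
  rw [eq_div_iff (mod_cast n.factorial_ne_zero), ← ascPochhammer_smeval_eq_eval,
    ← Ring.factorial_nsmul_multichoose_eq_ascPochhammer, nsmul_eq_mul, mul_comm]

theorem hasSum_ascPochhammer_eval_div_factorial_mul_pow (a : ℝ) {x : ℝ} (hx : |x| < 1) :
    HasSum (fun n : ℕ => (ascPochhammer ℝ n).eval a / n.factorial * x ^ n) ((1 - x) ^ (-a)) := by
  have hball : x ∈ Metric.eball (0 : ℝ) 1 := by
    simpa [← ofReal_norm] using hx
  have hbinom := (Real.one_div_one_sub_rpow_hasFPowerSeriesOnBall_zero a).hasSum hball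
  have hpos : 0 ≤ 1 - x := by linarith [le_abs_self x]
  have hcoeff (n : ℕ) :
      Ring.choose (a + n - 1) n = (ascPochhammer ℝ n).eval a / n.factorial := by
    rw [Ring.choose, ← multichoose_eq_ascPochhammer_eval_div_factorial,
      show a + n - 1 - n + 1 = a by ring]
  simpa [hcoeff, Real.rpow_neg hpos, mul_comm] using hbinom

section Interchange

variable {ι : Type*} {b β : ι → ℝ} {ρ : ℝ}

theorem summable_mul_ascPochhammer_eval_div_factorial_mul_pow {u : ℝ} (hu : |u| < 1)
    (huρ : (1 - |u|)⁻¹ ≤ ρ) (hb : Summable fun i => |b i| * ρ ^ |β i|) :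
    Summable fun p : ι × ℕ =>
      b p.1 * ((ascPochhammer ℝ p.2).eval (β p.1) / p.2.factorial * u ^ p.2) := by
  have hdom (i : ι) := (hasSum_ascPochhammer_eval_div_factorial_mul_pow |β i|
    (x := |u|) (by simpa using hu)).mul_left |b i|
  have hpos : 0 < 1 - |u| := sub_pos.2 hu
  have hnonneg (p : ι × ℕ) :
      0 ≤ |b p.1| * ((ascPochhammer ℝ p.2).eval |β p.1| / p.2.factorial * |u| ^ p.2) := by
    have hpoch := (abs_nonneg _).trans (abs_ascPochhammer_eval_le (β p.1) p.2)
    positivity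
  refine .of_norm_bounded
    ((summable_prod_of_nonneg hnonneg).2 ⟨fun i => (hdom i).summable, ?_⟩) fun p => ?_
  · simp only [(hdom _).tsum_eq]
    refine hb.of_nonneg_of_le (fun i => by positivity) fun i => ?_
    rw [Real.rpow_neg hpos.le, ← Real.inv_rpow hpos.le]
    gcongr
  · simp only [norm_mul, norm_div, norm_pow, Real.norm_eq_abs, Nat.abs_cast]
    gcongr
    exact abs_ascPochhammer_eval_le _ _

theorem eventually_abs_lt_one_and_inv_one_sub_abs_le (hρ : 1 < ρ) :
    ∀ᶠ u in 𝓝 (0 : ℝ), |u| < 1 ∧ (1 - |u|)⁻¹ ≤ ρ := by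
  have hcont : ContinuousAt (fun u : ℝ => (1 - |u|)⁻¹) 0 :=
    (continuousAt_const.sub continuous_abs.continuousAt).inv₀ (by simp)
  exact (continuous_abs.continuousAt.eventually_lt continuousAt_const (by simp)).and
    ((hcont.eventually_lt continuousAt_const (by simpa using hρ)).mono fun _ => le_of_lt)

theorem summable_mul_ascPochhammer_eval (hρ : 1 < ρ) (hb : Summable fun i => |b i| * ρ ^ |β i|)
    (n : ℕ) : Summable fun i => b i * (ascPochhammer ℝ n).eval (β i) := by
  -- The series is, up to a factor, a slice of the double series at any small `u ≠ 0`.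
  obtain ⟨u, ⟨hu, huρ⟩, hu0 : u ≠ 0⟩ :=
    (((eventually_abs_lt_one_and_inv_one_sub_abs_le hρ).filter_mono
      (nhdsWithin_le_nhds (s := {0}ᶜ))).and eventually_mem_nhdsWithin).exists
  have hslice :=
    (summable_mul_ascPochhammer_eval_div_factorial_mul_pow hu huρ hb).prod_symm.prod_factor n
  refine (hslice.mul_right (n.factorial / u ^ n)).congr fun i => ?_
  simp only [Prod.swap_prod_mk]
  field_simp

theorem hasFPowerSeriesAt_tsum_mul_one_sub_rpow (hρ : 1 < ρ)
    (hb : Summable fun i => |b i| * ρ ^ |β i|) :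
    HasFPowerSeriesAt (fun u => ∑' i, b i * (1 - u) ^ (-β i))
      (.ofScalars ℝ fun n : ℕ => (∑' i, b i * (ascPochhammer ℝ n).eval (β i)) / n.factorial) 0 := by
  rw [hasFPowerSeriesAt_iff']
  filter_upwards [eventually_abs_lt_one_and_inv_one_sub_abs_le hρ] with u ⟨hu, huρ⟩
  have hdouble := summable_mul_ascPochhammer_eval_div_factorial_mul_pow hu huρ hb
  have hsum : ∑' i, b i * (1 - u) ^ (-β i) =
      ∑' n : ℕ, ∑' i, b i * ((ascPochhammer ℝ n).eval (β i) / n.factorial * u ^ n) := by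
    rw [hdouble.tsum_comm]
    exact tsum_congr fun i =>
      ((hasSum_ascPochhammer_eval_div_factorial_mul_pow (β i) hu).mul_left (b i)).tsum_eq.symm
  rw [hsum]
  convert! hdouble.prod_symm.prod.hasSum using 2 with n
  rw [FormalMultilinearSeries.coeff_ofScalars, sub_zero, smul_eq_mul, ← tsum_div_const,
    ← tsum_mul_left]
  refine tsum_congr fun i => ?_
  simp only [Prod.swap_prod_mk]
  ring

end Interchange

theorem exists_one_lt_mul_rpow_lt_one {c : ℝ} (hc : c < 1) (γ : ℝ) :
    ∃ ρ : ℝ, 1 < ρ ∧ c * ρ ^ γ < 1 := by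
  have hcont : ContinuousAt (fun ρ : ℝ => c * ρ ^ γ) 1 :=
    continuousAt_const.mul (Real.continuousAt_rpow_const 1 γ (.inl one_ne_zero))
  have hlt := hcont.eventually_lt continuousAt_const (by simpa using hc)
  exact (eventually_mem_nhdsWithin.and (hlt.filter_mono (nhdsWithin_le_nhds (s := .Ioi 1)))).exists

theorem exists_one_lt_summable_abs_mul_rpow (α μ : ℝ) {lam : ℝ} (hlam : |lam| < 1) :
    ∃ ρ : ℝ, 1 < ρ ∧ Summable fun s : ℕ =>
      |(ascPochhammer ℝ s).eval μ * (-lam) ^ s / s.factorial| * ρ ^ |α * s| := by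
  obtain ⟨ρ, hρ, hlt⟩ := exists_one_lt_mul_rpow_lt_one hlam |α|
  have hρ0 : 0 < ρ := one_pos.trans hρ
  have hx : |-lam * ρ ^ (|α|)| < 1 := by
    rwa [abs_mul, abs_neg, abs_of_pos (Real.rpow_pos_of_pos hρ0 _)]
  refine ⟨ρ, hρ, (hasSum_ascPochhammer_eval_div_factorial_mul_pow μ hx).summable.abs.congr
    fun s => ?_⟩
  rw [abs_mul α, Nat.abs_cast, Real.rpow_mul_natCast hρ0.le, mul_pow, abs_mul, abs_div, abs_mul,
    abs_div, abs_mul, abs_of_pos (pow_pos (Real.rpow_pos_of_pos hρ0 |α|) s)]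
  ring

theorem one_add_mul_one_sub_rpow_eventuallyEq_tsum (α μ : ℝ) {lam : ℝ} (hlam : |lam| < 1) :
    (fun u : ℝ => (1 + lam * (1 - u) ^ (-α)) ^ (-μ)) =ᶠ[𝓝 0] fun u => ∑' s : ℕ,
      (ascPochhammer ℝ s).eval μ * (-lam) ^ s / s.factorial * (1 - u) ^ (-(α * s)) := by
  have hcont : ContinuousAt (fun u : ℝ => |-lam * (1 - u) ^ (-α)|) 0 :=
    (continuousAt_const.mul ((continuousAt_const.sub continuousAt_id).rpow_const
      (.inl (by simp)))).abs
  filter_upwards [hcont.eventually_lt continuousAt_const (by simpa using hlam),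
    eventually_lt_nhds one_pos] with u hx hu
  have hbinom := hasSum_ascPochhammer_eval_div_factorial_mul_pow μ hx
  rw [neg_mul, sub_neg_eq_add] at hbinom
  rw [← hbinom.tsum_eq]
  refine tsum_congr fun s => ?_
  rw [← neg_mul α, Real.rpow_mul_natCast (sub_pos.2 hu).le]
  ring

theorem discrete_prabhakar_kernel_general (α μ : ℝ) {lam : ℝ} (hlam : |lam| < 1) (n : ℕ) :
    Summable (fun s : ℕ => |(ascPochhammer ℝ s).eval μ * (-lam) ^ s / (s.factorial : ℝ) *
        (ascPochhammer ℝ n).eval (α * (s : ℝ))|) ∧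
    (1 / (n.factorial : ℝ)) * iteratedDeriv n
        (fun u : ℝ => (1 + lam * (1 - u) ^ (-α)) ^ (-μ)) 0
      = (1 / (n.factorial : ℝ)) * ∑' s : ℕ,
          (ascPochhammer ℝ s).eval μ * (-lam) ^ s / (s.factorial : ℝ) *
            (ascPochhammer ℝ n).eval (α * (s : ℝ)) := by
  obtain ⟨ρ, hρ, hsum⟩ := exists_one_lt_summable_abs_mul_rpow α μ hlam
  have hseries := (hasFPowerSeriesAt_tsum_mul_one_sub_rpow hρ hsum).congr
    (one_add_mul_one_sub_rpow_eventuallyEq_tsum α μ hlam).symm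
  refine ⟨(summable_mul_ascPochhammer_eval hρ hsum n).abs, ?_⟩
  rw [iteratedDeriv_eq_factorial_smul_coeff hseries, FormalMultilinearSeries.coeff_ofScalars,
    nsmul_eq_mul, mul_div_cancel₀ _ (by positivity)]

/-- For `α ∈ (0,1)`, `0 < λ < 1` and integers `m, n ≥ 0`: the series
`Σ_{s=0}^∞ ((m)_s(−λ)^s/s!)(αs)_n` converges absolutely, and the `n`-th Taylor
coefficient at `u = 0` of `u ↦ (1 + λ(1−u)^{−α})^{−m}` equals
`(1/n!) Σ_{s=0}^∞ ((m)_s(−λ)^s/s!)(αs)_n` (discrete approximation of a Prabhakar kernel). -/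
theorem discrete_prabhakar_kernel (α lam : ℝ) (m n : ℕ)
    (hα : α ∈ Set.Ioo (0 : ℝ) 1) (hlam : lam ∈ Set.Ioo (0 : ℝ) 1) :
    Summable (fun s : ℕ => |(ascPochhammer ℝ s).eval (m : ℝ) * (-lam) ^ s / (s.factorial : ℝ) *
        (ascPochhammer ℝ n).eval (α * (s : ℝ))|) ∧
    (1 / (n.factorial : ℝ)) * iteratedDeriv n
        (fun u : ℝ => (((1 + lam * (1 - u) ^ (-α)) ^ m)⁻¹)) 0
      = (1 / (n.factorial : ℝ)) * ∑' s : ℕ,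
          (ascPochhammer ℝ s).eval (m : ℝ) * (-lam) ^ s / (s.factorial : ℝ) *
            (ascPochhammer ℝ n).eval (α * (s : ℝ)) := by
  simpa [Real.rpow_neg_natCast] using
    discrete_prabhakar_kernel_general α m (abs_lt.2 ⟨by linarith [hlam.1], hlam.2⟩) n
end
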